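/- Let k ≥ 1, let A·B be a rectangle in the graph G_k, and let I₁ ≠ I₂ be two useful sets belonging to the same side of the rectangle (both in A or both in B). Then there exist i ∈ [k] and r ∈ {0,1} such that V_{i,r} ⊆ I₁ and V_{i,1−r} ⊆ I₂, where V_{i,r} = {v_{i, 2j+r} : 0 ≤ j ≤ q−1}. -/

import Mathlib

/-!
Write `I₁ ∪ B₁ = I_ρ₁` and `I₂ ∪ B₂ = I_ρ₂`, where `B₁, B₂` lie on the other side of the rectangle.

On the path of a variable `i` with `ρ₁ i ≠ ρ₂ i`, the vertices lie alternately in `I_ρ₁` and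
`I_ρ₂`. As neither `I₁, B₂` nor `I₂, B₁` are joined by an edge, consecutive vertices lie on the same
side of the rectangle, so the whole path does (`path_same_side`). If for some such `i` it is the
side of `I₁, I₂`, the conclusion holds with `r = ρ₁ i`.

Otherwise, for every such `i`, the path is covered by `B₁` and `B₂`, and then `I₁ = I₂`
(`subset_of_paths_opposite`, used in both directions). A vertex of `I₁` that also lies in `I_ρ₂`
is in `I₂`, since `I₁` and `B₂` are disjoint. A literal vertex of `I₁` outside `I_ρ₂` is on a path
covered by `B₁` and `B₂`, against the disjointness of `I₁` and `B₁`. A clause vertex of `I₁` outside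
`I_ρ₂` belongs to a clause satisfied by `ρ₂` but not by `ρ₁`, so it is adjacent to a literal vertex
of a variable on which `ρ₁` and `ρ₂` differ; that vertex has the parity prescribed by `ρ₂`, so it is
in `B₂`, a contradiction.
-/

/-- A 2-CNF clause on `k` variables: an ordered pair of variables `a < b` together
with negation flags `na`, `nb`. There are `q = 4·C(k,2) = 2k(k-1)` such clauses. -/
structure ClauseT (k : ℕ) where
  a : Fin k
  b : Fin k
  na : Bool
  nb : Bool
  hab : a < b

/-- The column index `2(l-1) + n` of the copy of a literal associated with the `l`-th
clause (`l` zero-indexed here), with negation flag `n`. -/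
def litIdx (q : ℕ) (l : Fin q) (neg : Bool) : Fin (2 * q) :=
  ⟨2 * l.val + (if neg then 1 else 0), by have := l.isLt; split <;> omega⟩

/-- Vertices of the graph `G_k`: the literal vertices `v_{i,j}` (`i ∈ [k]`,
`j ∈ {0,…,2q-1}`) and the clause vertices `w_l` (`l ∈ [q]`). -/
abbrev Vtx (k q : ℕ) := (Fin k × Fin (2 * q)) ⊕ Fin q

/-- Adjacency in `G_k`, for a given enumeration `w` of all 2-clauses:
(i) `v_{i,j-1} ~ v_{i,j}`; (ii) `w_l` is adjacent exactly to
`v_{a_l, 2(l-1)+na_l}` and `v_{b_l, 2(l-1)+nb_l}`. -/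
def GAdj {k q : ℕ} (w : Fin q → ClauseT k) : Vtx k q → Vtx k q → Prop :=
  fun x y => match x, y with
  | Sum.inl (i, j), Sum.inl (i', j') =>
      i = i' ∧ (j.val + 1 = j'.val ∨ j'.val + 1 = j.val)
  | Sum.inl (i, j), Sum.inr l =>
      (i = (w l).a ∧ j = litIdx q l (w l).na) ∨ (i = (w l).b ∧ j = litIdx q l (w l).nb)
  | Sum.inr l, Sum.inl (i, j) =>
      (i = (w l).a ∧ j = litIdx q l (w l).na) ∨ (i = (w l).b ∧ j = litIdx q l (w l).nb)
  | Sum.inr _, Sum.inr _ => False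

/-- Independent sets of `G_k`. -/
def IndepSet {k q : ℕ} (w : Fin q → ClauseT k) (S : Set (Vtx k q)) : Prop :=
  ∀ u ∈ S, ∀ v ∈ S, ¬ GAdj w u v

/-- The canonical solution `I_ρ` for an assignment `ρ : [k] → {0,1}`: all literal
vertices `v_{i,j}` with `j ≡ ρ(i) (mod 2)`, together with all clause vertices `w_l`
whose clause is not satisfied by `ρ` (i.e. `ρ(a_l) ≠ na_l` and `ρ(b_l) ≠ nb_l`). -/
def canonical {k q : ℕ} (w : Fin q → ClauseT k) (ρ : Fin k → Bool) : Set (Vtx k q) :=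
  fun x => match x with
  | Sum.inl (i, j) => j.val % 2 = (if ρ i then 1 else 0)
  | Sum.inr l => ρ (w l).a ≠ (w l).na ∧ ρ (w l).b ≠ (w l).nb

/-- A rectangle `𝒜·ℬ` in `G_k`: two families of independent sets of `G_k` such that
every `A ∈ 𝒜` and `B ∈ ℬ` are disjoint and non-adjacent. -/
def IsRectangle {k q : ℕ} (w : Fin q → ClauseT k)
    (𝒜 ℬ : Set (Set (Vtx k q))) : Prop :=
  (∀ A ∈ 𝒜, IndepSet w A) ∧ (∀ B ∈ ℬ, IndepSet w B) ∧
    ∀ A ∈ 𝒜, ∀ B ∈ ℬ, Disjoint A B ∧ ∀ u ∈ A, ∀ v ∈ B, ¬ GAdj w u v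

/-- `A` is a useful set of the side `𝒜`: `A ∈ 𝒜` and `A ∪ B` is a canonical solution
for some `B ∈ ℬ`. -/
def UsefulA {k q : ℕ} (w : Fin q → ClauseT k) (𝒜 ℬ : Set (Set (Vtx k q)))
    (A : Set (Vtx k q)) : Prop :=
  A ∈ 𝒜 ∧ ∃ B ∈ ℬ, ∃ ρ : Fin k → Bool, A ∪ B = canonical w ρ

/-- `B` is a useful set of the side `ℬ`. -/
def UsefulB {k q : ℕ} (w : Fin q → ClauseT k) (𝒜 ℬ : Set (Set (Vtx k q)))
    (B : Set (Vtx k q)) : Prop :=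
  B ∈ ℬ ∧ ∃ A ∈ 𝒜, ∃ ρ : Fin k → Bool, A ∪ B = canonical w ρ

/-- The set `V_{i,r} = {v_{i, 2j+r} : 0 ≤ j ≤ q-1}` of the literal vertices of
variable `i` with column parity `r`. -/
def Vir {k q : ℕ} (i : Fin k) (r : Bool) : Set (Vtx k q) :=
  {x | ∃ j : Fin (2 * q), x = Sum.inl (i, j) ∧ j.val % 2 = (if r then 1 else 0)}

theorem GAdj.symm {k q : ℕ} {w : Fin q → ClauseT k} {x y : Vtx k q} (h : GAdj w x y) :
    GAdj w y x := by
  rcases x with ⟨i, j⟩ | l <;> rcases y with ⟨i', j'⟩ | l' <;> simp only [GAdj] at h ⊢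
  · exact ⟨h.1.symm, h.2.symm⟩
  · exact h
  · exact h

/-- `X` and `Y` are disjoint and no edge of `G_k` joins them: the relation between the two sides of
a rectangle. -/
def Separated {k q : ℕ} (w : Fin q → ClauseT k) (X Y : Set (Vtx k q)) : Prop :=
  Disjoint X Y ∧ ∀ u ∈ X, ∀ v ∈ Y, ¬ GAdj w u v

theorem Separated.symm {k q : ℕ} {w : Fin q → ClauseT k} {X Y : Set (Vtx k q)}
    (h : Separated w X Y) : Separated w Y X :=
  ⟨h.1.symm, fun u hu v hv huv => h.2 v hv u hu huv.symm⟩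

/-- On the path of `i`, the set `X₁` is meant to receive the vertices of parity `r` and `X₂` those of
parity `!r`. If the first vertex is in the set meant for its parity, then so is every vertex. -/
theorem path_propagate {k q : ℕ} {w : Fin q → ClauseT k} {X₁ X₂ Y₁ Y₂ : Set (Vtx k q)}
    {i : Fin k} {r : Bool} (h₁ : Vir i r ⊆ X₁ ∪ Y₁) (h₂ : Vir i (!r) ⊆ X₂ ∪ Y₂)
    (s₁ : Separated w X₁ Y₂) (s₂ : Separated w X₂ Y₁) (hq : 0 < 2 * q)
    (hz₁ : r = false → Sum.inl (i, ⟨0, hq⟩) ∈ X₁) (hz₂ : r = true → Sum.inl (i, ⟨0, hq⟩) ∈ X₂) :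
    Vir i r ⊆ X₁ ∧ Vir i (!r) ⊆ X₂ := by
  have key : ∀ n (hn : n < 2 * q),
      (n % 2 = (if r then 1 else 0) → (Sum.inl (i, ⟨n, hn⟩) : Vtx k q) ∈ X₁) ∧
      (n % 2 = (if !r then 1 else 0) → (Sum.inl (i, ⟨n, hn⟩) : Vtx k q) ∈ X₂) := by
    intro n
    induction n with
    | zero => intro hn; cases r <;> simp_all
    | succ n ih =>
      intro hn
      obtain ⟨ih₁, ih₂⟩ := ih (by omega)
      have adj : GAdj w (Sum.inl (i, ⟨n, by omega⟩)) (Sum.inl (i, ⟨n + 1, hn⟩)) :=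
        ⟨rfl, Or.inl rfl⟩
      refine ⟨fun hp => ?_, fun hp => ?_⟩
      · have hx := ih₂ (by cases r <;> simp at hp ⊢ <;> omega)
        exact (h₁ ⟨_, rfl, hp⟩).resolve_right fun hy => s₂.2 _ hx _ hy adj
      · have hx := ih₁ (by cases r <;> simp at hp ⊢ <;> omega)
        exact (h₂ ⟨_, rfl, hp⟩).resolve_right fun hy => s₁.2 _ hx _ hy adj
  constructor
  · rintro _ ⟨j, rfl, hj⟩
    exact (key j j.isLt).1 hj
  · rintro _ ⟨j, rfl, hj⟩
    exact (key j j.isLt).2 hj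

/-- The path of a variable whose two parity classes are covered by `X₁ ∪ Y₁` and `X₂ ∪ Y₂` lies
entirely on the side of the `X`s or entirely on the side of the `Y`s. -/
theorem path_same_side {k q : ℕ} {w : Fin q → ClauseT k} {X₁ X₂ Y₁ Y₂ : Set (Vtx k q)}
    {i : Fin k} {r : Bool} (h₁ : Vir i r ⊆ X₁ ∪ Y₁) (h₂ : Vir i (!r) ⊆ X₂ ∪ Y₂)
    (s₁ : Separated w X₁ Y₂) (s₂ : Separated w X₂ Y₁) :
    (Vir i r ⊆ X₁ ∧ Vir i (!r) ⊆ X₂) ∨ (Vir i r ⊆ Y₁ ∧ Vir i (!r) ⊆ Y₂) := by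
  rcases Nat.eq_zero_or_pos (2 * q) with hq | hq
  · left
    constructor <;> rintro _ ⟨j, -, -⟩ <;> exact absurd j.isLt (by omega)
  have h₁' : Vir i r ⊆ Y₁ ∪ X₁ := Set.union_comm X₁ Y₁ ▸ h₁
  have h₂' : Vir i (!r) ⊆ Y₂ ∪ X₂ := Set.union_comm X₂ Y₂ ▸ h₂
  cases r with
  | false =>
    rcases h₁ ⟨⟨0, hq⟩, rfl, by simp⟩ with h | h
    · exact Or.inl (path_propagate h₁ h₂ s₁ s₂ hq (fun _ => h) (by simp))
    · exact Or.inr (path_propagate h₁' h₂' s₂.symm s₁.symm hq (fun _ => h) (by simp))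
  | true =>
    rcases h₂ ⟨⟨0, hq⟩, rfl, by simp⟩ with h | h
    · exact Or.inl (path_propagate h₁ h₂ s₁ s₂ hq (by simp) (fun _ => h))
    · exact Or.inr (path_propagate h₁' h₂' s₂.symm s₁.symm hq (by simp) (fun _ => h))

theorem Vir_subset_canonical {k q : ℕ} (w : Fin q → ClauseT k) (ρ : Fin k → Bool) (i : Fin k) :
    Vir i (ρ i) ⊆ canonical w ρ := by
  rintro _ ⟨j, rfl, hj⟩
  exact hj

theorem litIdx_mod_two (q : ℕ) (l : Fin q) (n : Bool) :
    (litIdx q l n).val % 2 = if n then 1 else 0 := by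
  cases n <;> simp [litIdx]

theorem subset_of_paths_opposite {k q : ℕ} {w : Fin q → ClauseT k} {I₁ I₂ B₁ B₂ : Set (Vtx k q)}
    {ρ₁ ρ₂ : Fin k → Bool} (h₁ : I₁ ∪ B₁ = canonical w ρ₁) (h₂ : I₂ ∪ B₂ = canonical w ρ₂)
    (s₁₁ : Separated w I₁ B₁) (s₁₂ : Separated w I₁ B₂)
    (hB₁ : ∀ i, ρ₁ i ≠ ρ₂ i → Vir i (ρ₁ i) ⊆ B₁)
    (hB₂ : ∀ i, ρ₁ i ≠ ρ₂ i → Vir i (ρ₂ i) ⊆ B₂) : I₁ ⊆ I₂ := by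
  intro x hx
  have hc : x ∈ canonical w ρ₁ := h₁ ▸ Or.inl hx
  suffices hc₂ : x ∈ canonical w ρ₂ by
    rw [← h₂] at hc₂
    exact hc₂.resolve_right (Set.disjoint_left.1 s₁₂.1 hx)
  rcases x with ⟨i, j⟩ | l
  · by_cases hi : ρ₁ i = ρ₂ i
    · change j.val % 2 = _ at hc
      change j.val % 2 = _
      rwa [← hi]
    · exact absurd (hB₁ i hi ⟨j, rfl, hc⟩) (Set.disjoint_left.1 s₁₁.1 hx)
  · obtain ⟨ha, hb⟩ := hc
    refine ⟨fun h => ?_, fun h => ?_⟩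
    · exact s₁₂.2 _ hx _ (hB₂ (w l).a (h ▸ ha) ⟨_, rfl, h ▸ litIdx_mod_two q l (w l).na⟩)
        (Or.inl ⟨rfl, rfl⟩)
    · exact s₁₂.2 _ hx _ (hB₂ (w l).b (h ▸ hb) ⟨_, rfl, h ▸ litIdx_mod_two q l (w l).nb⟩)
        (Or.inr ⟨rfl, rfl⟩)

/-- The theorem for one side of the rectangle, phrased so that it applies to either side. -/
theorem exists_path_of_ne {k q : ℕ} {w : Fin q → ClauseT k} {I₁ I₂ B₁ B₂ : Set (Vtx k q)}
    {ρ₁ ρ₂ : Fin k → Bool} (h₁ : I₁ ∪ B₁ = canonical w ρ₁) (h₂ : I₂ ∪ B₂ = canonical w ρ₂)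
    (s₁₁ : Separated w I₁ B₁) (s₁₂ : Separated w I₁ B₂)
    (s₂₁ : Separated w I₂ B₁) (s₂₂ : Separated w I₂ B₂) (hne : I₁ ≠ I₂) :
    ∃ (i : Fin k) (r : Bool), Vir i r ⊆ I₁ ∧ Vir i (!r) ⊆ I₂ := by
  by_contra hcon
  have hB : ∀ i, ρ₁ i ≠ ρ₂ i → Vir i (ρ₁ i) ⊆ B₁ ∧ Vir i (ρ₂ i) ⊆ B₂ := by
    intro i hi
    have hr : ρ₂ i = !(ρ₁ i) := by cases h : ρ₁ i <;> cases h' : ρ₂ i <;> simp_all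
    have hV₂ := Vir_subset_canonical w ρ₂ i
    rw [hr, ← h₂] at hV₂
    rw [hr]
    exact (path_same_side (h₁ ▸ Vir_subset_canonical w ρ₁ i) hV₂ s₁₂ s₂₁).resolve_left
      fun h => hcon ⟨i, _, h⟩
  exact hne (Set.Subset.antisymm
    (subset_of_paths_opposite h₁ h₂ s₁₁ s₁₂ (fun i hi => (hB i hi).1) (fun i hi => (hB i hi).2))
    (subset_of_paths_opposite h₂ h₁ s₂₂ s₂₁ (fun i hi => (hB i hi.symm).2)
      (fun i hi => (hB i hi.symm).1)))

/-- Let `k ≥ 1`, let `𝒜·ℬ` be a rectangle in `G_k` (with `q = 2k(k-1)`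
and `w` a bijective enumeration of all 2-clauses), and let `I₁ ≠ I₂` be two useful
sets belonging to the same side of the rectangle. Then there are `i ∈ [k]` and
`r ∈ {0,1}` with `V_{i,r} ⊆ I₁` and `V_{i,1-r} ⊆ I₂`. -/
theorem stmt_16 (k q : ℕ) (hk : 1 ≤ k) (hq : q = 2 * k * (k - 1))
    (w : Fin q → ClauseT k) (hw : Function.Bijective w)
    (𝒜 ℬ : Set (Set (Vtx k q))) (hrect : IsRectangle w 𝒜 ℬ)
    (I₁ I₂ : Set (Vtx k q)) (hne : I₁ ≠ I₂)
    (hside : (UsefulA w 𝒜 ℬ I₁ ∧ UsefulA w 𝒜 ℬ I₂) ∨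
             (UsefulB w 𝒜 ℬ I₁ ∧ UsefulB w 𝒜 ℬ I₂)) :
    ∃ (i : Fin k) (r : Bool), Vir i r ⊆ I₁ ∧ Vir i (!r) ⊆ I₂ := by
  obtain ⟨-, -, hs⟩ := hrect
  rcases hside with ⟨⟨hI₁, B₁, hB₁, ρ₁, h₁⟩, ⟨hI₂, B₂, hB₂, ρ₂, h₂⟩⟩ |
    ⟨⟨hI₁, A₁, hA₁, ρ₁, h₁⟩, ⟨hI₂, A₂, hA₂, ρ₂, h₂⟩⟩
  · exact exists_path_of_ne h₁ h₂ (hs _ hI₁ _ hB₁) (hs _ hI₁ _ hB₂) (hs _ hI₂ _ hB₁)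
      (hs _ hI₂ _ hB₂) hne
  · have hs' : ∀ B ∈ ℬ, ∀ A ∈ 𝒜, Separated w B A := fun B hB A hA =>
      Separated.symm (hs A hA B hB)
    rw [Set.union_comm] at h₁ h₂
    exact exists_path_of_ne h₁ h₂ (hs' _ hI₁ _ hA₁) (hs' _ hI₁ _ hA₂) (hs' _ hI₂ _ hA₁)
      (hs' _ hI₂ _ hA₂) hne
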